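/- The trace map Tr : SL(2,ℂ) × SL(2,ℂ) → ℂ³ given by Tr(x,y) = (tr x, tr y, tr(xy)) is surjective: for every (s,t,u) ∈ ℂ³ there exist x, y ∈ SL(2,ℂ) with tr x = s, tr y = t, and tr(xy) = u. -/

import Mathlib

open Matrix

abbrev SL2C := Matrix.SpecialLinearGroup (Fin 2) ℂ

noncomputable def tr2 (x : SL2C) : ℂ := Matrix.trace (x : Matrix (Fin 2) (Fin 2) ℂ)

/-!
The matrices `!![0, a; -a⁻¹, t]` have determinant `1` and trace `t`. Taking `a = 1` in the first
factor, the trace of the product of two of them with traces `s` and `t` is `s * t - (a + a⁻¹)`, so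
it remains to write `v = s * t - u` as `a + a⁻¹`, that is, to solve `a ^ 2 - v * a + 1 = 0`. This
polynomial is separable unless `v = ±2`, and then `a = ±1` is a root.
-/

section CommRing

variable {R : Type*} [CommRing R]

/-- The matrix `!![0, a; -a⁻¹, t]` of determinant one: the unit `a` is a parameter that can be
varied without changing the trace `t`. -/
def unitTraceMatrix (a : Rˣ) (t : R) : Matrix.SpecialLinearGroup (Fin 2) R :=
  ⟨!![0, a; -↑a⁻¹, t], by simp⟩

theorem trace_unitTraceMatrix (a : Rˣ) (t : R) :
    (unitTraceMatrix a t : Matrix (Fin 2) (Fin 2) R).trace = t := by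
  simp [unitTraceMatrix, trace_fin_two]

theorem trace_unitTraceMatrix_mul_unitTraceMatrix (a b : Rˣ) (s t : R) :
    ((unitTraceMatrix a s * unitTraceMatrix b t : Matrix.SpecialLinearGroup (Fin 2) R) :
      Matrix (Fin 2) (Fin 2) R).trace = s * t - (↑(a⁻¹ * b) + ↑(a⁻¹ * b)⁻¹) := by
  have hinv : (a⁻¹ * b)⁻¹ = b⁻¹ * a := by group
  rw [Matrix.SpecialLinearGroup.coe_mul, hinv, Units.val_mul, Units.val_mul]
  simp only [unitTraceMatrix, mul_fin_two, trace_fin_two_of]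
  ring

end CommRing

section IsSepClosed

variable {K : Type*} [Field K]

open Polynomial in
theorem separable_X_sq_sub_C_mul_X_add_one {v : K} (hv : v ^ 2 ≠ 4) :
    (X ^ 2 - C v * X + 1 : K[X]).Separable := by
  have hd : 4 - v ^ 2 ≠ 0 := sub_ne_zero.mpr hv.symm
  -- `4 * p - (2 * X - v) * derivative p = 4 - v ^ 2`, a nonzero constant.
  refine ⟨C (4 - v ^ 2)⁻¹ * 4, -(C (4 - v ^ 2)⁻¹ * (2 * X - C v)), ?_⟩
  have hC : C (4 - v ^ 2)⁻¹ * (4 - C v ^ 2) = 1 := by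
    rw [← C_ofNat, ← C_pow, ← C_sub, ← C_mul, inv_mul_cancel₀ hd, C_1]
  simp only [derivative_add, derivative_sub, derivative_X_sq, derivative_C_mul, derivative_X,
    derivative_one, C_ofNat]
  linear_combination hC

open Polynomial in
theorem exists_sq_sub_mul_add_one_eq_zero [IsSepClosed K] (v : K) :
    ∃ a : K, a ^ 2 - v * a + 1 = 0 := by
  by_cases hv : v ^ 2 = 4
  · have : (v - 2) * (v + 2) = 0 := by linear_combination hv
    rcases mul_eq_zero.mp this with h | h
    · exact ⟨1, by linear_combination -h⟩
    · exact ⟨-1, by linear_combination h⟩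
  · have hdeg : (X ^ 2 - C v * X + 1 : K[X]).degree = 2 := by compute_degree!
    obtain ⟨a, ha⟩ := IsSepClosed.exists_root _ (by simp [hdeg])
      (separable_X_sq_sub_C_mul_X_add_one hv)
    exact ⟨a, by simpa using ha⟩

theorem exists_units_add_inv_eq [IsSepClosed K] (v : K) : ∃ a : Kˣ, (a : K) + ↑a⁻¹ = v := by
  obtain ⟨a, ha⟩ := exists_sq_sub_mul_add_one_eq_zero v
  have hmul : a * (v - a) = 1 := by linear_combination -ha
  exact ⟨Units.mkOfMulEqOne a (v - a) hmul, add_sub_cancel a v⟩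

theorem trace_map_surjective_general [IsSepClosed K] (s t u : K) :
    ∃ x y : Matrix.SpecialLinearGroup (Fin 2) K,
      (x : Matrix (Fin 2) (Fin 2) K).trace = s ∧ (y : Matrix (Fin 2) (Fin 2) K).trace = t ∧
        ((x * y : Matrix.SpecialLinearGroup (Fin 2) K) : Matrix (Fin 2) (Fin 2) K).trace = u := by
  obtain ⟨a, ha⟩ := exists_units_add_inv_eq (s * t - u)
  refine ⟨unitTraceMatrix 1 s, unitTraceMatrix a t, trace_unitTraceMatrix 1 s,
    trace_unitTraceMatrix a t, ?_⟩
  rw [trace_unitTraceMatrix_mul_unitTraceMatrix, inv_one, one_mul, ha, sub_sub_cancel]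

end IsSepClosed

/-- the trace map `(x,y) ↦ (tr x, tr y, tr (xy))` from
`SL(2,ℂ) × SL(2,ℂ)` to `ℂ³` is surjective. -/
theorem trace_map_surjective (s t u : ℂ) :
    ∃ x y : SL2C, tr2 x = s ∧ tr2 y = t ∧ tr2 (x * y) = u :=
  trace_map_surjective_general s t u
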